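/- Let k be a field and M a 1-dimensional behavior, i.e., a closed k[z]-submodule M ⊆ (k^N)^{r_0} where z acts by the shift σ(λ_0, λ_1, ...) = (λ_1, λ_2, ...) and k^N has the product topology. Then there exist a natural number r_1, a matrix G(z) ∈ M_{r_0 × r_1}(k[z]), and an exact sequence 0 → M → (k^N)^{r_0} →^{·G(z)} (k^N)^{r_1}; moreover M is isomorphic as a topological k[z]-module to (k^N)^r ⊕ N where r = r_0 − r_1 and N is a finite-dimensional k-module. -/

import Mathlib

/-- The shift operator `σ(λ₀, λ₁, …) = (λ₁, λ₂, …)` on `k^ℕ`, as a `k`-linear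
endomorphism; it makes `k^ℕ` a `k[z]`-module, `z` acting by `σ`. -/
def shiftEnd (k : Type*) [Field k] : Module.End k (ℕ → k) where
  toFun φ := fun n => φ (n + 1)
  map_add' := fun _ _ => rfl
  map_smul' := fun _ _ => rfl

/-!
A vector `w ∈ (k^ℕ)^ι` is the same as a `k[z]`-linear map `k[z]^ι → k^ℕ`, `p ↦ ∑ i, p i • w i`.

The linear functionals on `(k^ℕ)^ι` depending on finitely many coordinates are exactly the maps
`w ↦ (∑ i, p i • w i) 0` for `p ∈ k[z]^ι`. A point outside a closed subspace `M` is already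
separated from `M` by finitely many coordinates, hence by such a functional; if moreover `M` is
shift-invariant, `(∑ i, p i • w i) 0 = 0` on `M` forces `∑ i, p i • w i = 0` on `M`. So `M` is the
solution module of its module of equations `N ⊆ k[z]^ι`.

Smith normal form gives a basis of `k[z]^ι` in which `N` is generated by nonzero multiples `a j` of
some of the basis vectors. In the corresponding coordinates `M` is a product of copies of `k^ℕ`
(the free coordinates) and of the solution spaces of `a j • y = 0`, and such a solution is
determined by its first `deg (a j)` values.
-/

open Polynomial

section Equations

variable {ι κ τ R A : Type*} [Finite ι] [CommSemiring R] [AddCommMonoid A] [Module R A]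

variable (R) in
/-- The orthogonal `S^⊥ ⊆ R^ι` of a set `S ⊆ A^ι`: the linear equations `∑ i, p i • w i = 0`
satisfied by all `w ∈ S`. -/
noncomputable def equationModule (S : Set (ι → A)) : Submodule R (ι → R) :=
  ⨅ w ∈ S, LinearMap.ker (Module.piEquiv ι R A w)

variable (A) in
/-- The orthogonal `N^⊥ ⊆ A^ι` of a module `N ⊆ R^ι` of linear equations: the common solutions
`w` of the equations `∑ i, p i • w i = 0` for `p ∈ N`. -/
noncomputable def solutionModule (N : Submodule R (ι → R)) : Submodule R (ι → A) where
  carrier := {w | ∀ p ∈ N, Module.piEquiv ι R A w p = 0}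
  zero_mem' p _ := by simp
  add_mem' hv hw p hp := by simp [hv p hp, hw p hp]
  smul_mem' c w hw p hp := by simp [hw p hp]

lemma mem_equationModule {S : Set (ι → A)} {p : ι → R} :
    p ∈ equationModule R S ↔ ∀ w ∈ S, Module.piEquiv ι R A w p = 0 := by
  simp [equationModule]

lemma mem_solutionModule {N : Submodule R (ι → R)} {w : ι → A} :
    w ∈ solutionModule A N ↔ ∀ p ∈ N, Module.piEquiv ι R A w p = 0 :=
  Iff.rfl

lemma mem_solutionModule_span_range {g : τ → ι → R} {w : ι → A} :
    w ∈ solutionModule A (Submodule.span R (Set.range g)) ↔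
      ∀ j, Module.piEquiv ι R A w (g j) = 0 := by
  change _ ≤ LinearMap.ker (Module.piEquiv ι R A w) ↔ _
  simp [Submodule.span_le, Set.range_subset_iff]

variable [TopologicalSpace A] [ContinuousAdd A] [ContinuousConstSMul R A]

lemma continuous_basis_constr {V : Type*} [AddCommMonoid V] [Module R V]
    (b : Module.Basis ι R V) (v : V) : Continuous fun w : ι → A => b.constr R w v := by
  cases nonempty_fintype ι
  simp only [Module.Basis.constr_apply_fintype]
  fun_prop

variable (A) in
/-- The coordinates `s ↦ ∑ i, b s i • w i` of `w ∈ A^ι` with respect to a basis `b` of `R^ι`: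
change of basis in the identification `A^ι ≃ Hom_R(R^ι, A)`. -/
noncomputable def basisCoords [Finite κ] (b : Module.Basis κ R (ι → R)) :
    (ι → A) ≃L[R] (κ → A) where
  toLinearEquiv := Module.piEquiv ι R A ≪≫ₗ (b.constr R).symm
  continuous_toFun := continuous_pi fun s => continuous_basis_constr (Pi.basisFun R ι) (b s)
  continuous_invFun := continuous_pi fun i => continuous_basis_constr b (Pi.basisFun R ι i)

lemma basisCoords_apply [Finite κ] (b : Module.Basis κ R (ι → R)) (w : ι → A) (s : κ) :
    basisCoords A b w s = Module.piEquiv ι R A w (b s) :=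
  rfl

lemma mem_solutionModule_span_smul_basis [Finite κ] [Finite τ]
    {b : Module.Basis (κ ⊕ τ) R (ι → R)} {a : τ → R} {w : ι → A} :
    w ∈ solutionModule A (Submodule.span R (Set.range fun j => a j • b (.inr j))) ↔
      ∀ j, a j • basisCoords A b w (.inr j) = 0 := by
  simp only [mem_solutionModule_span_range, map_smul, basisCoords_apply]

variable (A) in
/-- In the coordinates of `b`, the equations `a j • b (inr j)` are decoupled: they leave the
coordinates indexed by `κ` free and confine the `j`-th remaining one to the `a j`-torsion of `A`. -/
noncomputable def solutionModuleSpanSMulBasisEquiv [Finite κ] [Finite τ]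
    (b : Module.Basis (κ ⊕ τ) R (ι → R)) (a : τ → R) :
    solutionModule A (Submodule.span R (Set.range fun j => a j • b (.inr j))) ≃L[R]
      (κ → A) × ∀ j, Submodule.torsionBy R A (a j) where
  toFun w := (fun s => basisCoords A b w (.inl s),
    fun j => ⟨basisCoords A b w (.inr j), mem_solutionModule_span_smul_basis.1 w.2 j⟩)
  map_add' _ _ := by ext <;> simp
  map_smul' _ _ := by ext <;> simp
  invFun x := ⟨(basisCoords A b).symm (Sum.elim x.1 fun j => x.2 j),
    mem_solutionModule_span_smul_basis.2 fun j => by simp⟩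
  left_inv w := by
    ext1
    refine (basisCoords A b).symm_apply_eq.2 (funext fun s => ?_)
    cases s <;> rfl
  right_inv x := by ext <;> simp
  continuous_toFun := by fun_prop
  continuous_invFun := by
    refine ((basisCoords A b).symm.continuous.comp (continuous_pi fun s => ?_)).subtype_mk _
    cases s <;> dsimp only [Sum.elim_inl, Sum.elim_inr] <;> fun_prop

end Equations

section SmithNormalForm

lemma exists_sum_equiv_inr_eq {r n : ℕ} (f : Fin n ↪ Fin r) :
    ∃ ε : Fin (r - n) ⊕ Fin n ≃ Fin r, ∀ j, ε (.inr j) = f j := by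
  classical
  have card_compl : Fintype.card ↥(Set.range f)ᶜ = r - n := by
    rw [Fintype.card_compl_set, Set.card_range_of_injective f.injective, Fintype.card_fin,
      Fintype.card_fin]
  exact ⟨(Equiv.sumComm _ _).trans <| ((Equiv.ofInjective f f.injective).sumCongr
    (Fintype.equivFinOfCardEq card_compl).symm).trans (Equiv.Set.sumCompl (Set.range f)),
    fun _ => rfl⟩

lemma exists_basis_span_range_smul_eq {R V : Type*} [CommRing R] [IsDomain R]
    [IsPrincipalIdealRing R] [AddCommGroup V] [Module R V] {r : ℕ} (v : Module.Basis (Fin r) R V)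
    (N : Submodule R V) :
    ∃ (n : ℕ) (b : Module.Basis (Fin (r - n) ⊕ Fin n) R V) (a : Fin n → R),
      (∀ j, a j ≠ 0) ∧ Submodule.span R (Set.range fun j => a j • b (.inr j)) = N := by
  obtain ⟨n, S⟩ := Submodule.smithNormalForm v N
  obtain ⟨ε, hε⟩ := exists_sum_equiv_inr_eq S.f
  have snf (j : Fin n) : S.a j • S.bM.reindex ε.symm (.inr j) = S.bN j := by simp [S.snf, hε]
  refine ⟨n, S.bM.reindex ε.symm, S.a, fun j ha => S.bN.ne_zero j ?_, ?_⟩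
  · rw [← Submodule.coe_eq_zero, ← snf, ha, zero_smul]
  · simp only [snf]
    rw [Set.range_comp', ← Submodule.coe_subtype, Submodule.span_image, S.bN.span_eq,
      Submodule.map_subtype_top]

end SmithNormalForm

section ClosedSubspaces

lemma exists_finset_forall_notMem_of_isClosed {σ : Type*} {X : σ → Type*}
    [∀ x, TopologicalSpace (X x)] {s : Set (∀ x, X x)} (hs : IsClosed s) {w : ∀ x, X x}
    (hw : w ∉ s) : ∃ I : Finset σ, ∀ v, (∀ x ∈ I, v x = w x) → v ∉ s := by
  obtain ⟨I, u, hu, hsub⟩ := isOpen_pi_iff.1 hs.isOpen_compl w hw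
  exact ⟨I, fun v hv => hsub fun x hx => hv x hx ▸ (hu x hx).2⟩

variable {k σ : Type*} [Field k] [TopologicalSpace k]

lemma exists_finsupp_separating_of_isClosed {M : Submodule k (σ → k)}
    (hM : IsClosed (M : Set (σ → k))) {w : σ → k} (hw : w ∉ M) :
    ∃ f : σ →₀ k, (∀ m ∈ M, Finsupp.linearCombination k m f = 0) ∧
      Finsupp.linearCombination k w f ≠ 0 := by
  classical
  obtain ⟨I, hI⟩ := exists_finset_forall_notMem_of_isClosed hM hw
  let restrict : (σ → k) →ₗ[k] (I → k) := LinearMap.funLeft k k Subtype.val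
  have restrict_notMem : restrict w ∉ M.map restrict := by
    rintro ⟨m, hm, h⟩
    exact hI m (fun x hx => congrFun h ⟨x, hx⟩) hm
  obtain ⟨g, hgw, hgM⟩ := Submodule.exists_le_ker_of_notMem restrict_notMem
  let f : σ →₀ k := ∑ x : I, Finsupp.single (x : σ) (g fun y => if x = y then 1 else 0)
  have pairing_f (v : σ → k) : Finsupp.linearCombination k v f = g (restrict v) := by
    simp [f, g.pi_apply_eq_sum_univ (restrict v), restrict, LinearMap.funLeft_apply, mul_comm]
  refine ⟨f, fun m hm => ?_, ?_⟩
  · rw [pairing_f]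
    exact hgM (Submodule.mem_map_of_mem hm)
  · rwa [pairing_f]

variable {N : Type*} [IsTopologicalRing k] [AddCommGroup N] [Module k N] [TopologicalSpace N]
  [ContinuousAdd N] [ContinuousSMul k N]

lemma nonempty_continuousLinearEquiv_of_injective [Finite σ] (ρ : N →L[k] (σ → k))
    (hρ : Function.Injective ρ) : Nonempty (N ≃L[k] (Fin (Module.finrank k N) → k)) := by
  have : Module.Finite k N := Module.Finite.of_injective ρ.toLinearMap hρ
  let β := (Module.finBasis k N).equivFun
  obtain ⟨g, hg⟩ := ρ.toLinearMap.exists_leftInverse_of_injective (LinearMap.ker_eq_bot.2 hρ)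
  have β_eq (u : N) : β u = (β.toLinearMap ∘ₗ g) (ρ u) := congrArg β (LinearMap.congr_fun hg u).symm
  exact ⟨{
    toLinearEquiv := β
    continuous_toFun :=
      ((LinearMap.continuous_on_pi (β.toLinearMap ∘ₗ g)).comp ρ.continuous).congr
        fun u => (β_eq u).symm
    continuous_invFun := LinearMap.continuous_on_pi β.symm.toLinearMap }⟩

end ClosedSubspaces

section Shift

variable {k ι : Type*} [Field k]

/-- The `k[z]`-module structure on `k^ℕ` in which `z` acts by the shift. It is put on `ℕ → k` itself
and not on the synonym `Module.AEval'`, so that the product topology stays available. -/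
noncomputable abbrev shiftModule (k : Type*) [Field k] : Module k[X] (ℕ → k) :=
  Module.compHom (ℕ → k) (aeval (shiftEnd k)).toRingHom

attribute [local instance] shiftModule

lemma smul_eq_aeval_shiftEnd (p : k[X]) (y : ℕ → k) : p • y = aeval (shiftEnd k) p y :=
  rfl

lemma X_smul_apply (y : ℕ → k) (t : ℕ) : ((X : k[X]) • y) t = y (t + 1) := by
  simp [smul_eq_aeval_shiftEnd, shiftEnd]

lemma X_smul_eq (w : ι → ℕ → k) : (X : k[X]) • w = fun i n => w i (n + 1) :=
  funext fun i => funext fun n => X_smul_apply (w i) n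

local instance isScalarTower_shiftModule : IsScalarTower k k[X] (ℕ → k) where
  smul_assoc c p y := by simp [smul_eq_aeval_shiftEnd]

lemma X_pow_smul_apply (t : ℕ) (y : ℕ → k) (n : ℕ) : ((X : k[X]) ^ t • y) n = y (n + t) := by
  induction t generalizing y with
  | zero => simp
  | succ t ih => rw [pow_succ, mul_smul, ih, X_smul_apply, add_assoc]

lemma smul_apply_eq_sum_range (p : k[X]) (y : ℕ → k) (n : ℕ) :
    (p • y) n = ∑ i ∈ Finset.range (p.natDegree + 1), p.coeff i * y (n + i) := by
  conv_lhs => rw [p.as_sum_range]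
  simp only [Finset.sum_smul, Finset.sum_apply, ← smul_X_eq_monomial, smul_assoc, Pi.smul_apply,
    X_pow_smul_apply, smul_eq_mul]

lemma eq_zero_of_smul_eq_zero_of_forall_lt_natDegree {p : k[X]} (hp : p ≠ 0) {y : ℕ → k}
    (hy : p • y = 0) (h_init : ∀ t < p.natDegree, y t = 0) : y = 0 := by
  funext n
  induction n using Nat.strong_induction_on with
  | _ n ih =>
    by_cases hn : n < p.natDegree
    · exact h_init n hn
    have recurrence := congrFun hy (n - p.natDegree)
    rw [smul_apply_eq_sum_range, Finset.sum_range_succ, Finset.sum_eq_zero, zero_add,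
      Nat.sub_add_cancel (not_lt.1 hn)] at recurrence
    · exact (mul_eq_zero.1 recurrence).resolve_left (by simpa using hp)
    · intro i hi
      have := Finset.mem_range.1 hi
      rw [ih _ (by omega), Pi.zero_apply, mul_zero]

lemma exists_piEquiv_apply_zero_eq [Finite ι] (f : ι × ℕ →₀ k) :
    ∃ p : ι → k[X], ∀ w : ι → ℕ → k,
      Module.piEquiv ι k[X] (ℕ → k) w p 0 = Finsupp.linearCombination k (Function.uncurry w) f := by
  classical
  cases nonempty_fintype ι
  induction f using Finsupp.induction_linear with
  | zero => exact ⟨0, fun w => by simp⟩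
  | add f g hf hg =>
    obtain ⟨p, hp⟩ := hf
    obtain ⟨q, hq⟩ := hg
    exact ⟨p + q, fun w => by rw [map_add, map_add, Pi.add_apply, hp, hq]⟩
  | single x c =>
    refine ⟨Pi.single x.1 (c • X ^ x.2), fun w => ?_⟩
    rw [Module.piEquiv_apply_apply, Finset.sum_eq_single_of_mem x.1 (Finset.mem_univ _)
      fun i _ hi => by rw [Pi.single_eq_of_ne hi, zero_smul]]
    simp [smul_assoc, X_pow_smul_apply, Function.uncurry]

lemma piEquiv_eq_zero_of_apply_zero_eq_zero [Finite ι] {M : Set (ι → ℕ → k)}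
    (hshift : ∀ w ∈ M, (X : k[X]) • w ∈ M) {p : ι → k[X]}
    (hp : ∀ w ∈ M, Module.piEquiv ι k[X] (ℕ → k) w p 0 = 0) :
    ∀ w ∈ M, Module.piEquiv ι k[X] (ℕ → k) w p = 0 := by
  suffices ∀ t, ∀ w ∈ M, Module.piEquiv ι k[X] (ℕ → k) w p t = 0 from
    fun w hw => funext fun t => this t w hw
  intro t
  induction t with
  | zero => exact hp
  | succ t ih =>
    intro w hw
    rw [← X_smul_apply (Module.piEquiv ι k[X] (ℕ → k) w p), ← LinearMap.smul_apply, ← map_smul]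
    exact ih _ (hshift w hw)

variable [TopologicalSpace k]

theorem solutionModule_equationModule_of_isClosed [Finite ι] {M : Submodule k (ι → ℕ → k)}
    (hM : IsClosed (M : Set (ι → ℕ → k))) (hshift : ∀ w ∈ M, (X : k[X]) • w ∈ M) :
    (solutionModule (ℕ → k) (equationModule k[X] (M : Set (ι → ℕ → k)))).restrictScalars k = M := by
  refine le_antisymm (fun w hw => ?_) fun w hw =>
    mem_solutionModule.2 fun p hp => mem_equationModule.1 hp w hw
  by_contra hwM
  let curry := LinearEquiv.curry k k ι ℕ
  have closed_comap : IsClosed (M.comap curry.toLinearMap : Set (ι × ℕ → k)) :=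
    hM.preimage (f := curry) <| continuous_pi fun i => continuous_pi fun t =>
      continuous_apply (i, t)
  obtain ⟨f, hfM, hfw⟩ :=
    exists_finsupp_separating_of_isClosed closed_comap (w := Function.uncurry w) hwM
  obtain ⟨p, hp⟩ := exists_piEquiv_apply_zero_eq f
  have p_mem : p ∈ equationModule k[X] (M : Set (ι → ℕ → k)) :=
    mem_equationModule.2 <| piEquiv_eq_zero_of_apply_zero_eq_zero hshift fun m hm => by
      rw [hp]
      exact hfM _ hm
  exact hfw (by rw [← hp, mem_solutionModule.1 hw p p_mem, Pi.zero_apply])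

variable [IsTopologicalRing k]

local instance continuousConstSMul_shiftModule : ContinuousConstSMul k[X] (ℕ → k) where
  continuous_const_smul p := continuous_pi fun n => by
    simp only [smul_apply_eq_sum_range]
    fun_prop

lemma nonempty_pi_torsionBy_continuousLinearEquiv {τ : Type*} [Finite τ] {a : τ → k[X]}
    (ha : ∀ j, a j ≠ 0) :
    ∃ d, Nonempty ((∀ j, Submodule.torsionBy k[X] (ℕ → k) (a j)) ≃L[k] (Fin d → k)) := by
  let initialValues :
      (∀ j, Submodule.torsionBy k[X] (ℕ → k) (a j)) →L[k] ((j : τ) × Fin (a j).natDegree → k) :=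
    { toFun u x := (u x.1 : ℕ → k) x.2
      map_add' _ _ := rfl
      map_smul' _ _ := rfl
      cont := continuous_pi fun x => (continuous_apply (x.2 : ℕ)).comp
        (continuous_subtype_val.comp (continuous_apply x.1)) }
  have injective : Function.Injective initialValues := by
    refine (injective_iff_map_eq_zero _).2 fun u hu => funext fun j => Subtype.ext ?_
    exact eq_zero_of_smul_eq_zero_of_forall_lt_natDegree (ha j) (u j).2
      fun t ht => congrFun hu ⟨j, t, ht⟩
  have (j : τ) : ContinuousSMul k (Submodule.torsionBy k[X] (ℕ → k) (a j)) :=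
    Topology.IsInducing.subtypeVal.continuousSMul continuous_id rfl
  exact ⟨_, nonempty_continuousLinearEquiv_of_injective initialValues injective⟩

theorem behavior_kernel_representation_and_structure_general
    (k : Type*) [Field k] [TopologicalSpace k] [IsTopologicalRing k]
    (r₀ : ℕ) (M : Submodule k (Fin r₀ → ℕ → k))
    (hclosed : IsClosed (M : Set (Fin r₀ → ℕ → k)))
    (hshift : ∀ w ∈ M, (fun i n => w i (n + 1)) ∈ M) :
    ∃ (r₁ : ℕ) (G : Matrix (Fin r₀) (Fin r₁) (Polynomial k)),
      ((M : Set (Fin r₀ → ℕ → k)) =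
        {w | ∀ j : Fin r₁, (∑ i, Polynomial.aeval (shiftEnd k) (G i j) (w i)) = 0}) ∧
      ∃ (d : ℕ) (T : (Fin d → k) →ₗ[k] (Fin d → k))
        (e : M ≃ₗ[k] ((Fin (r₀ - r₁) → ℕ → k) × (Fin d → k))),
        Continuous e ∧ Continuous e.symm ∧
        ∀ w : M,
          e ⟨fun i n => (w : Fin r₀ → ℕ → k) i (n + 1), hshift w.1 w.2⟩
            = ((fun i n => (e w).1 i (n + 1)), T (e w).2) := by
  simp only [← X_smul_eq] at hshift ⊢
  obtain ⟨N, rfl⟩ : ∃ N, (solutionModule (ℕ → k) N).restrictScalars k = M :=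
    ⟨_, solutionModule_equationModule_of_isClosed hclosed hshift⟩
  obtain ⟨n, b, a, ha, rfl⟩ := exists_basis_span_range_smul_eq (Pi.basisFun k[X] (Fin r₀)) N
  obtain ⟨d, ⟨β⟩⟩ := nonempty_pi_torsionBy_continuousLinearEquiv ha
  let E := solutionModuleSpanSMulBasisEquiv (ℕ → k) b a
  let F := (ContinuousLinearEquiv.refl k (Fin (r₀ - n) → ℕ → k)).prodCongr β
  refine ⟨n, fun i j => (a j • b (.inr j)) i, ?_, d,
    β.toLinearEquiv.conj (Algebra.lsmul k k _ (X : k[X])),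
    E.toLinearEquiv.restrictScalars k ≪≫ₗ F.toLinearEquiv, F.continuous.comp E.continuous,
    E.symm.continuous.comp F.symm.continuous, fun w => ?_⟩
  · ext w
    simp only [SetLike.mem_coe, Submodule.restrictScalars_mem, mem_solutionModule_span_range,
      Module.piEquiv_apply_apply, smul_eq_aeval_shiftEnd, Set.mem_ofPred_eq]
  · refine (congrArg F (map_smul E X w)).trans (Prod.ext rfl ?_)
    exact congrArg (fun u => β ((X : k[X]) • u)) (β.symm_apply_apply (E w).2).symm

end Shift

/-- Let `M ⊆ (k^ℕ)^{r₀}` be a 1-dimensional behavior: a closed,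
shift-invariant `k`-submodule (`k^ℕ` with the product topology, `k` discrete). Then
there are `r₁ ∈ ℕ` and a polynomial matrix `G ∈ M_{r₀×r₁}(k[z])` with
`M = ker(·G : (k^ℕ)^{r₀} → (k^ℕ)^{r₁})` (a kernel representation, i.e. an exact sequence
`0 → M → (k^ℕ)^{r₀} → (k^ℕ)^{r₁}`), and `M` is isomorphic as a topological `k[z]`-module
to `(k^ℕ)^{r₀ - r₁} ⊕ N` with `N` a finite-dimensional `k`-module: there is a
`k`-linear homeomorphism `e : M ≃ (k^ℕ)^{r₀-r₁} × k^d` intertwining the shift on `M`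
with the shift on the product factor and a `k`-linear endomorphism `T` on `k^d`. -/
theorem behavior_kernel_representation_and_structure
    (k : Type*) [Field k] [TopologicalSpace k] [DiscreteTopology k]
    (r₀ : ℕ) (M : Submodule k (Fin r₀ → ℕ → k))
    (hclosed : IsClosed (M : Set (Fin r₀ → ℕ → k)))
    (hshift : ∀ w ∈ M, (fun i n => w i (n + 1)) ∈ M) :
    ∃ (r₁ : ℕ) (G : Matrix (Fin r₀) (Fin r₁) (Polynomial k)),
      ((M : Set (Fin r₀ → ℕ → k)) =
        {w | ∀ j : Fin r₁, (∑ i, Polynomial.aeval (shiftEnd k) (G i j) (w i)) = 0}) ∧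
      ∃ (d : ℕ) (T : (Fin d → k) →ₗ[k] (Fin d → k))
        (e : M ≃ₗ[k] ((Fin (r₀ - r₁) → ℕ → k) × (Fin d → k))),
        Continuous e ∧ Continuous e.symm ∧
        ∀ w : M,
          e ⟨fun i n => (w : Fin r₀ → ℕ → k) i (n + 1), hshift w.1 w.2⟩
            = ((fun i n => (e w).1 i (n + 1)), T (e w).2) :=
  behavior_kernel_representation_and_structure_general k r₀ M hclosed hshift
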